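/- Let N₁ ⊆ M_{m₁} and N₂ ⊆ M_{m₂} be unital *-subalgebras. Then for every 1 ≤ p ≤ ∞: D_{p,cb}(M_{m₁} ⊗ M_{m₂} ‖ N₁ ⊗ N₂) ≤ D_{p,cb}(M_{m₁}‖N₁) + D_{∞,cb}(M_{m₂}‖N₂). In particular, for p = 1 and p = ∞ one has additivity: D_cb(M_{m₁} ⊗ M_{m₂} ‖ N₁ ⊗ N₂) = D_cb(M_{m₁}‖N₁) + D_cb(M_{m₂}‖N₂) and D_{∞,cb}(M_{m₁} ⊗ M_{m₂} ‖ N₁ ⊗ N₂) = D_{∞,cb}(M_{m₁}‖N₁) + D_{∞,cb}(M_{m₂}‖N₂). -/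

import Mathlib

open scoped ENNReal Classical ComplexOrder
open Matrix

noncomputable section

namespace GJL

variable {n : Type*} [Fintype n] [DecidableEq n]

/-- `Mat n` is the matrix *-algebra with rows and columns indexed by `n`. -/
abbrev Mat (n : Type*) [Fintype n] [DecidableEq n] := Matrix n n ℂ

/-- A density matrix: positive semidefinite with trace one. -/
def IsDensity (ρ : Mat n) : Prop := ρ.PosSemidef ∧ ρ.trace = 1

/-- The real part of the (matrix) trace. -/
def traceR (A : Mat n) : ℝ := (A.trace).re

/-- Real matrix powers via the continuous functional calculus.  For positive
semidefinite matrices and negative exponents this is the generalized inverse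
power on the support, since `(0 : ℝ) ^ r = 0` for `r ≠ 0`. -/
def mpow (A : Mat n) (r : ℝ) : Mat n := cfc (fun x : ℝ => x ^ r) A

/-- Matrix logarithm on the support (`Real.log 0 = 0`). -/
def mlog (A : Mat n) : Mat n := cfc Real.log A

/-- Schatten `p`-norm `(Tr ((x* x)^(p/2)))^(1/p)`. -/
def snorm (p : ℝ) (x : Mat n) : ℝ := (traceR (mpow (xᴴ * x) (p/2))) ^ (1/p)

/-- Operator norm `‖x‖_∞`. -/
def opNorm (x : Mat n) : ℝ := ‖(Matrix.toEuclideanCLM (𝕜 := ℂ) x : EuclideanSpace ℂ n →L[ℂ] EuclideanSpace ℂ n)‖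

/-- The support projection of `ρ` is dominated by that of `σ` (for positive
semidefinite matrices: `ker σ ⊆ ker ρ`). -/
def suppLe (ρ σ : Mat n) : Prop := ∀ v, σ.mulVec v = 0 → ρ.mulVec v = 0

/-- `e` is the support projection of `ρ`. -/
def IsSupportProj (ρ e : Mat n) : Prop :=
  e.IsHermitian ∧ e * e = e ∧ ∀ v, e.mulVec v = 0 ↔ ρ.mulVec v = 0

/-- `D_∞(ρ‖σ) = log min {λ ≥ 0 | ρ ≤ λ σ}`, `⊤` if no such `λ` exists. -/
def Dinf (ρ σ : Mat n) : EReal :=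
  if ∃ c : ℝ, 0 ≤ c ∧ (c • σ - ρ).PosSemidef then
    ((Real.log (sInf {c : ℝ | 0 ≤ c ∧ (c • σ - ρ).PosSemidef}) : ℝ) : EReal)
  else ⊤

/-- Umegaki relative entropy `D(ρ‖σ) = Tr(ρ log ρ - ρ log σ)`, `⊤` if the
support condition fails. -/
def DU (ρ σ : Mat n) : EReal :=
  if suppLe ρ σ then ((traceR (ρ * mlog ρ - ρ * mlog σ) : ℝ) : EReal) else ⊤

/-- The sandwiched matrix `σ^{(1-p)/(2p)} ρ σ^{(1-p)/(2p)}`; note that for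
`p > 1` the exponent `(1-p)/(2p)` equals `-1/(2p')` with `1/p + 1/p' = 1`. -/
def sandwich (p : ℝ) (ρ σ : Mat n) : Mat n :=
  mpow σ ((1 - p)/(2*p)) * ρ * mpow σ ((1 - p)/(2*p))

/-- The sandwiched Rényi relative entropy `D_p(ρ‖σ)` for `p ∈ [1/2, ∞]`:
for `p ∈ (1,∞)` it is `p' log ‖σ^{-1/(2p')} ρ σ^{-1/(2p')}‖_p
= (p-1)⁻¹ log Tr ((σ^{-1/(2p')} ρ σ^{-1/(2p')})^p)` when the support of `ρ` is
dominated by that of `σ` and `⊤` otherwise; for `p ∈ [1/2, 1)` it is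
`(p-1)⁻¹ log Tr ((σ^{(1-p)/(2p)} ρ σ^{(1-p)/(2p)})^p)` (`⊤` when the trace
vanishes, i.e. when the honest value is `+∞`); `D_1` is the Umegaki relative
entropy and `D_∞` the max-relative entropy. -/
def Dp (p : ℝ≥0∞) (ρ σ : Mat n) : EReal :=
  if p = ⊤ then Dinf ρ σ
  else if p = 1 then DU ρ σ
  else if 1 < p.toReal ∧ ¬ suppLe ρ σ then ⊤
  else if traceR (mpow (sandwich p.toReal ρ σ) p.toReal) = 0 then ⊤
  else (((p.toReal - 1)⁻¹ * Real.log (traceR (mpow (sandwich p.toReal ρ σ) p.toReal)) : ℝ) : EReal)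

/-- `D_p(ρ‖S) = inf { D_p(ρ‖σ) | σ a density in S }`. -/
def DpSet (p : ℝ≥0∞) (ρ : Mat n) (S : Set (Mat n)) : EReal :=
  ⨅ σ ∈ {σ ∈ S | IsDensity σ}, Dp p ρ σ

/-- `D_p(A‖S) = sup { D_p(ρ‖S) | ρ a density in A }`. -/
def DpRel (p : ℝ≥0∞) (A S : Set (Mat n)) : EReal :=
  ⨆ ρ ∈ {ρ ∈ A | IsDensity ρ}, DpSet p ρ S

open scoped Kronecker in
/-- The algebraic tensor product `N₁ ⊗ N₂ ⊆ M_{n₁} ⊗ M_{n₂} = M_{n₁ × n₂}`,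
realized as the linear span of Kronecker products. -/
def tensorSpan {n₁ n₂ : Type*} [Fintype n₁] [DecidableEq n₁] [Fintype n₂] [DecidableEq n₂]
    (N₁ : Set (Mat n₁)) (N₂ : Set (Mat n₂)) : Set (Mat (n₁ × n₂)) :=
  ↑(Submodule.span ℂ {z : Mat (n₁ × n₂) | ∃ x ∈ N₁, ∃ y ∈ N₂, z = x ⊗ₖ y})

/-- `D_{p,cb}(M‖N) = sup_k D_p(M_k ⊗ M ‖ M_k ⊗ N)`. -/
def DpCb (p : ℝ≥0∞) (N : Set (Mat n)) : EReal :=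
  ⨆ k : ℕ, DpRel p Set.univ (tensorSpan (Set.univ : Set (Mat (Fin k))) N)

/-- `E` is the trace preserving conditional expectation onto `N`, i.e. the
orthogonal projection onto `N` with respect to the Hilbert–Schmidt inner
product `⟨x,y⟩ = Tr(x* y)`. -/
def IsCondExp (N : Set (Mat n)) (E : Mat n →ₗ[ℂ] Mat n) : Prop :=
  (∀ x, E x ∈ N) ∧ (∀ x ∈ N, E x = x) ∧
    ∀ x y, y ∈ N → ((E x)ᴴ * y).trace = (xᴴ * y).trace

/-- The Pimsner–Popa index constant
`λ(M:N) = max {c ≥ 0 | c x ≤ E(x) for all x ≥ 0}`. -/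
def ppIndex (E : Mat n →ₗ[ℂ] Mat n) : ℝ :=
  sSup {c : ℝ | 0 ≤ c ∧ ∀ x : Mat n, x.PosSemidef → (E x - c • x).PosSemidef}

/-- von Neumann entropy `H(ρ) = -Tr(ρ log ρ)`. -/
def vnEntropy (ρ : Mat n) : ℝ := - traceR (ρ * mlog ρ)

/-- The amplification `id_{M_k} ⊗ Φ` acting on `M_k ⊗ M_n = M_{k × n}`,
applying `Φ` blockwise. -/
def ampFun (k : Type*) [Fintype k] [DecidableEq k] (Φ : Mat n →ₗ[ℂ] Mat n)
    (X : Mat (k × n)) : Mat (k × n) :=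
  Matrix.of fun a b => Φ (Matrix.of fun s t => X (a.1, s) (b.1, t)) a.2 b.2

/-- Complete positivity: all amplifications `id_{M_k} ⊗ Φ` preserve positive
semidefiniteness. -/
def IsCP (Φ : Mat n →ₗ[ℂ] Mat n) : Prop :=
  ∀ (k : ℕ) (X : Mat (Fin k × n)), X.PosSemidef → (ampFun (Fin k) Φ X).PosSemidef

/-- Completely positive and trace preserving. -/
def IsCPTP (Φ : Mat n →ₗ[ℂ] Mat n) : Prop :=
  IsCP Φ ∧ ∀ x : Mat n, (Φ x).trace = x.trace

/-!
Let `E` be the trace-preserving conditional expectation onto a unital *-subalgebra `N` of `M_n`,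
and let `Ω` be the unnormalised maximally entangled vector, `C = (id ⊗ E)(ΩΩ*)`, `ψ = C^(-1/2) Ω`
and `c = ‖ψ‖²`. Since `ψψ* ≤ c`, conjugation by `C^(1/2)` gives `ΩΩ* ≤ c C`, and hence
`ρ ≤ c (id ⊗ E)(ρ)` for every state `ρ` on every `M_k ⊗ M_n`, because every vector is `(T ⊗ 1) Ω`
for some `T`. So `D_p(ρ‖M_k ⊗ N) ≤ log c`. Conversely `(id ⊗ E)(ψψ*) = C^(-1/2) C C^(-1/2) ≤ 1`,
so the pure state `ψψ*/c` has overlap at most `1/c` with every state in `M_n ⊗ N`, which forces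
`D_p(ψψ*/c‖M_n ⊗ N) ≥ log c`. Therefore `D_{p,cb}(M_n‖N) = log c` for every `p ∈ [1, ∞]`. Both
inequalities characterising `c` are preserved by tensor products, so `c` is multiplicative.
-/

section

open scoped MatrixOrder Kronecker

/-! ### Trace and functional calculus -/

lemma traceR_add (A B : Mat n) : traceR (A + B) = traceR A + traceR B := by
  simp [traceR]

lemma traceR_sub (A B : Mat n) : traceR (A - B) = traceR A - traceR B := by
  simp [traceR]

lemma traceR_neg (A : Mat n) : traceR (-A) = -traceR A := by
  simp [traceR]

lemma traceR_smul (c : ℝ) (A : Mat n) : traceR (c • A) = c * traceR A := by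
  simp [traceR]

lemma traceR_sum {ι : Type*} (s : Finset ι) (f : ι → Mat n) :
    traceR (∑ i ∈ s, f i) = ∑ i ∈ s, traceR (f i) := by
  simp [traceR, trace_sum]

lemma traceR_mul_comm (A B : Mat n) : traceR (A * B) = traceR (B * A) := by
  simp [traceR, trace_mul_comm A B]

lemma traceR_nonneg {A : Mat n} (hA : 0 ≤ A) : 0 ≤ traceR A :=
  (Complex.le_def.1 hA.posSemidef.trace_nonneg).1

lemma coe_traceR {A : Mat n} (hA : 0 ≤ A) : (traceR A : ℂ) = A.trace :=
  Complex.ext rfl (Complex.le_def.1 hA.posSemidef.trace_nonneg).2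

lemma traceR_mono {A B : Mat n} (h : A ≤ B) : traceR A ≤ traceR B := by
  simpa [traceR_sub] using traceR_nonneg (sub_nonneg.2 h)

lemma traceR_mul_nonneg {A B : Mat n} (hA : 0 ≤ A) (hB : 0 ≤ B) : 0 ≤ traceR (A * B) := by
  obtain ⟨C, rfl⟩ := CStarAlgebra.nonneg_iff_eq_star_mul_self.1 hA
  rw [mul_assoc, traceR_mul_comm]
  exact traceR_nonneg (star_right_conjugate_nonneg hB C)

lemma traceR_mul_le_mul_left {A B C : Mat n} (hA : 0 ≤ A) (h : B ≤ C) :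
    traceR (A * B) ≤ traceR (A * C) := by
  simpa [mul_sub, traceR_sub] using traceR_mul_nonneg hA (sub_nonneg.2 h)

lemma continuousOn_spectrum (f : ℝ → ℝ) (A : Mat n) : ContinuousOn f (spectrum ℝ A) :=
  finite_real_spectrum.continuousOn f

lemma continuousOn_image_spectrum (f g : ℝ → ℝ) (A : Mat n) :
    ContinuousOn f (g '' spectrum ℝ A) :=
  (finite_real_spectrum.image g).continuousOn f

lemma mpow_nonneg {A : Mat n} (hA : 0 ≤ A) (r : ℝ) : 0 ≤ mpow A r :=
  cfc_nonneg fun _ hx => Real.rpow_nonneg (spectrum_nonneg_of_nonneg hA hx) r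

lemma isHermitian_mpow (A : Mat n) (r : ℝ) : (mpow A r).IsHermitian :=
  cfc_predicate (fun x : ℝ => x ^ r) A

lemma mpow_zero {A : Mat n} (hA : A.IsHermitian) : mpow A 0 = 1 := by
  simpa [mpow] using cfc_const_one ℝ A hA.isSelfAdjoint

lemma mpow_one {A : Mat n} (hA : A.IsHermitian) : mpow A 1 = A := by
  simpa [mpow] using cfc_id' ℝ A hA.isSelfAdjoint

lemma mpow_mul_mpow {A : Mat n} (hA : 0 ≤ A) {r s : ℝ} (h : r + s ≠ 0) :
    mpow A r * mpow A s = mpow A (r + s) := by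
  rw [mpow, mpow, ← cfc_mul _ _ A (continuousOn_spectrum _ A) (continuousOn_spectrum _ A)]
  exact cfc_congr fun x hx => (Real.rpow_add' (spectrum_nonneg_of_nonneg hA hx) h).symm

lemma mpow_mpow {A : Mat n} (hA : 0 ≤ A) (r s : ℝ) : mpow (mpow A r) s = mpow A (r * s) := by
  rw [mpow, mpow, ← cfc_comp' _ _ A (continuousOn_image_spectrum _ _ A)
    (continuousOn_spectrum _ A) hA.isSelfAdjoint]
  exact cfc_congr fun x hx => (Real.rpow_mul (spectrum_nonneg_of_nonneg hA hx) r s).symm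

lemma mpow_smul {A : Mat n} (hA : 0 ≤ A) {t : ℝ} (ht : 0 ≤ t) (r : ℝ) :
    mpow (t • A) r = t ^ r • mpow A r := by
  rw [mpow, mpow, ← cfc_comp_smul t _ A (continuousOn_image_spectrum _ _ A) hA.isSelfAdjoint,
    ← cfc_smul _ _ A (continuousOn_spectrum _ A)]
  exact cfc_congr fun x hx => Real.mul_rpow ht (spectrum_nonneg_of_nonneg hA hx)

open scoped Matrix.Norms.L2Operator in
lemma mpow_le_mpow {A B : Mat n} (hA : 0 ≤ A) (h : A ≤ B) {r : ℝ} (hr : r ∈ Set.Icc (0 : ℝ) 1) :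
    mpow A r ≤ mpow B r := by
  rw [mpow, mpow, ← CFC.rpow_eq_cfc_real hA, ← CFC.rpow_eq_cfc_real (hA.trans h)]
  exact CFC.rpow_le_rpow hr h

/-- The support projection of a Hermitian matrix: the spectral projection of `ℝ \ {0}`. -/
def supportProj (A : Mat n) : Mat n := cfc (fun x : ℝ => if x = 0 then 0 else 1) A

lemma supportProj_le_one (A : Mat n) : supportProj A ≤ 1 :=
  cfc_le_one _ _ fun x _ => by split_ifs <;> norm_num

lemma isHermitian_supportProj (A : Mat n) : (supportProj A).IsHermitian :=
  cfc_predicate (fun x : ℝ => if x = 0 then 0 else 1) A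

lemma supportProj_mul_supportProj (A : Mat n) : supportProj A * supportProj A = supportProj A := by
  rw [supportProj, ← cfc_mul _ _ A (continuousOn_spectrum _ A) (continuousOn_spectrum _ A)]
  exact cfc_congr fun x _ => by simp

lemma supportProj_mul_self {A : Mat n} (hA : A.IsHermitian) : supportProj A * A = A := by
  nth_rw 2 3 [← cfc_id' ℝ A hA.isSelfAdjoint]
  rw [supportProj, ← cfc_mul _ _ A (continuousOn_spectrum _ A)]
  exact cfc_congr fun x _ => by simp +contextual

lemma mpow_mul_mpow_neg {A : Mat n} (hA : 0 ≤ A) {r : ℝ} (hr : r ≠ 0) :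
    mpow A r * mpow A (-r) = supportProj A := by
  rw [mpow, mpow, ← cfc_mul _ _ A (continuousOn_spectrum _ A) (continuousOn_spectrum _ A)]
  refine cfc_congr fun x hx => ?_
  rcases (spectrum_nonneg_of_nonneg hA hx).eq_or_lt with rfl | hx
  · simp [hr]
  · simp [hx.ne', ← Real.rpow_add hx]

/-- The spectral projection of a Hermitian matrix onto its `i`-th eigenvector. -/
def eigenProj {A : Mat n} (hA : A.IsHermitian) (i : n) : Mat n :=
  vecMulVec (hA.eigenvectorBasis i) (star (hA.eigenvectorBasis i : n → ℂ))

section eigenProj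

variable {A : Mat n} (hA : A.IsHermitian)

lemma eigenProj_nonneg (i : n) : 0 ≤ eigenProj hA i :=
  (posSemidef_vecMulVec_self_star _).nonneg

lemma traceR_eigenProj (i : n) : traceR (eigenProj hA i) = 1 := by
  have h := (hA.eigenvectorBasis).orthonormal.1 i
  rw [eigenProj, traceR, trace_vecMulVec, ← EuclideanSpace.inner_eq_star_dotProduct,
    inner_self_eq_norm_sq_to_K, h]
  simp

lemma mul_eigenProj (i : n) : A * eigenProj hA i = hA.eigenvalues i • eigenProj hA i := by
  rw [eigenProj, mul_vecMulVec, hA.mulVec_eigenvectorBasis, smul_vecMulVec]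

lemma cfc_eq_sum_eigenProj (f : ℝ → ℝ) :
    cfc f A = ∑ i, f (hA.eigenvalues i) • eigenProj hA i := by
  rw [hA.cfc_eq f, IsHermitian.cfc, Unitary.conjStarAlgAut_apply]
  ext a b
  simp [mul_apply, Matrix.sum_apply, diagonal_apply, eigenProj, vecMulVec_apply, star_apply,
    mul_comm, mul_assoc]

lemma sum_eigenProj : ∑ i, eigenProj hA i = 1 := by
  simpa using (cfc_eq_sum_eigenProj hA fun _ => 1).symm.trans (cfc_const_one ℝ A)

lemma traceR_mul_cfc (B : Mat n) (f : ℝ → ℝ) :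
    traceR (B * cfc f A) = ∑ i, f (hA.eigenvalues i) * traceR (B * eigenProj hA i) := by
  simp only [cfc_eq_sum_eigenProj hA, Finset.mul_sum, traceR_sum, mul_smul_comm, traceR_smul]

lemma mul_eigenProj_eq_zero {B : Mat n} (h : suppLe B A) {i : n} (hi : hA.eigenvalues i = 0) :
    B * eigenProj hA i = 0 := by
  rw [eigenProj, mul_vecMulVec, h _ (by rw [hA.mulVec_eigenvectorBasis, hi, zero_smul]),
    zero_vecMulVec]

end eigenProj

lemma traceR_mul_cfc_le_of_suppLe {A B : Mat n} (hA : A.IsHermitian)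
    (hB : 0 ≤ B) (h : suppLe B A) {f g : ℝ → ℝ}
    (hfg : ∀ x ∈ spectrum ℝ A, x ≠ 0 → f x ≤ g x) :
    traceR (B * cfc f A) ≤ traceR (B * cfc g A) := by
  simp only [traceR_mul_cfc hA]
  refine Finset.sum_le_sum fun i _ => ?_
  rcases eq_or_ne (hA.eigenvalues i) 0 with hi | hi
  · simp [mul_eigenProj_eq_zero hA h hi, traceR]
  · exact mul_le_mul_of_nonneg_right (hfg _ (hA.eigenvalues_mem_spectrum_real i) hi)
      (traceR_mul_nonneg hB (eigenProj_nonneg hA i))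

/-! ### Trace inequalities -/

lemma rpow_traceR_mul_le {P Z : Mat n} (hP : 0 ≤ P) (hP1 : traceR P ≤ 1) (hZ : 0 ≤ Z)
    {p : ℝ} (hp : 1 ≤ p) : traceR (P * Z) ^ p ≤ traceR (P * mpow Z p) := by
  have hZh := hZ.posSemidef.1
  set l := hZh.eigenvalues
  set w : n → ℝ := fun i => traceR (P * eigenProj hZh i)
  have hl : ∀ i, 0 ≤ l i := hZ.posSemidef.eigenvalues_nonneg
  have hw : ∀ i, 0 ≤ w i := fun i => traceR_mul_nonneg hP (eigenProj_nonneg hZh i)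
  have hw1 : ∑ i, w i ≤ 1 := by
    rwa [← traceR_sum, ← Finset.mul_sum, sum_eigenProj, mul_one]
  have hsum : ∀ r : ℝ, traceR (P * mpow Z r) = ∑ i, w i * l i ^ r := fun r => by
    rw [mpow, traceR_mul_cfc hZh]
    exact Finset.sum_congr rfl fun i _ => mul_comm _ _
  have hmean : ∑ i, w i * l i ≤ (∑ i, w i * l i ^ p) ^ p⁻¹ := by
    refine (Real.inner_le_weight_mul_Lp_of_nonneg Finset.univ hp w l hw hl).trans ?_
    refine mul_le_of_le_one_left (Real.rpow_nonneg (Finset.sum_nonneg fun i _ =>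
      mul_nonneg (hw i) (Real.rpow_nonneg (hl i) _)) _) ?_
    exact Real.rpow_le_one (Finset.sum_nonneg fun i _ => hw i) hw1
      (sub_nonneg.2 (inv_le_one_of_one_le₀ hp))
  have h1 : traceR (P * Z) = ∑ i, w i * l i := by simpa [mpow_one hZh] using hsum 1
  rw [← h1, ← hsum] at hmean
  refine (Real.le_rpow_inv_iff_of_pos (traceR_mul_nonneg hP hZ)
    (traceR_mul_nonneg hP (mpow_nonneg hZ p)) (by linarith)).1 hmean

lemma mul_conjTranspose_self_le_one {B : Mat n} (h : Bᴴ * B ≤ 1) : B * Bᴴ ≤ 1 := by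
  have h1 : 0 ≤ B * (1 - Bᴴ * B) * Bᴴ := star_right_conjugate_nonneg (sub_nonneg.2 h) B
  have h2 : 0 ≤ (1 - B * Bᴴ)ᴴ * (1 - B * Bᴴ) := star_mul_self_nonneg (1 - B * Bᴴ)
  rw [← sub_nonneg]
  convert add_nonneg h1 h2 using 1
  simp only [conjTranspose_sub, conjTranspose_one, conjTranspose_mul, conjTranspose_conjTranspose]
  noncomm_ring

lemma traceR_mpow_conj_le {B Z : Mat n} (hZ : 0 ≤ Z) (hB : Bᴴ * B ≤ 1) {p : ℝ} (hp : 1 ≤ p) :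
    traceR (mpow (Bᴴ * Z * B) p) ≤ traceR (mpow Z p) := by
  have hX : 0 ≤ Bᴴ * Z * B := star_left_conjugate_nonneg hZ B
  have hXh := hX.posSemidef.1
  set x := hXh.eigenvalues
  set P := eigenProj hXh
  have hBP : ∀ (i : n) (Y : Mat n), traceR (B * P i * Bᴴ * Y) = traceR (P i * (Bᴴ * Y * B)) :=
    fun i Y => by rw [mul_assoc, mul_assoc, traceR_mul_comm]; simp only [mul_assoc]
  have hx : ∀ i, x i = traceR (B * P i * Bᴴ * Z) := fun i => by
    rw [hBP, traceR_mul_comm, mul_eigenProj, traceR_smul, traceR_eigenProj, mul_one]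
  have hBP1 : ∀ i, traceR (B * P i * Bᴴ) ≤ 1 := fun i => by
    have h := traceR_mul_le_mul_left (eigenProj_nonneg hXh i) hB
    rw [mul_one, traceR_eigenProj] at h
    simpa using (hBP i 1).le.trans (by simpa using h)
  calc traceR (mpow (Bᴴ * Z * B) p) = ∑ i, x i ^ p := by
        simp only [mpow, cfc_eq_sum_eigenProj hXh, traceR_sum, traceR_smul, traceR_eigenProj,
          mul_one, x]
    _ ≤ ∑ i, traceR (B * P i * Bᴴ * mpow Z p) := by
        refine Finset.sum_le_sum fun i _ => ?_
        rw [hx]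
        exact rpow_traceR_mul_le (star_right_conjugate_nonneg (eigenProj_nonneg hXh i) B)
          (hBP1 i) hZ hp
    _ = traceR (mpow Z p * (B * Bᴴ)) := by
        rw [← traceR_sum, ← Finset.sum_mul, ← Finset.sum_mul, ← Finset.mul_sum, sum_eigenProj,
          mul_one, traceR_mul_comm]
    _ ≤ traceR (mpow Z p) := by
        simpa using traceR_mul_le_mul_left (mpow_nonneg hZ p) (mul_conjTranspose_self_le_one hB)

section Comparison

variable {ρ σ : Mat n}

lemma suppLe_of_le_smul (hρ : 0 ≤ ρ) {c : ℝ} (h : ρ ≤ c • σ) : suppLe ρ σ := by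
  intro v hv
  refine (hρ.posSemidef.dotProduct_mulVec_zero_iff v).1
    (le_antisymm ?_ (hρ.posSemidef.dotProduct_mulVec_nonneg v))
  simpa [sub_mulVec, smul_mulVec, hv] using (le_iff.1 h).dotProduct_mulVec_nonneg v

lemma sandwich_nonneg (hρ : 0 ≤ ρ) (p : ℝ) : 0 ≤ sandwich p ρ σ := by
  have h := star_right_conjugate_nonneg hρ (mpow σ ((1 - p) / (2 * p)))
  rwa [star_eq_conjTranspose, isHermitian_mpow] at h

lemma sandwich_smul (hσ : 0 ≤ σ) (p : ℝ) {c : ℝ} (hc : 0 < c) :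
    sandwich p ρ (c • σ) = c ^ ((1 - p) / p) • sandwich p ρ σ := by
  rw [sandwich, sandwich, mpow_smul hσ hc.le, smul_mul_assoc, smul_mul_assoc, mul_smul_comm,
    smul_smul, ← Real.rpow_add hc, ← add_div]
  congr 2
  ring

lemma conjTranspose_mul_self_mpow_mul_mpow_neg_le_one (hρ : 0 ≤ ρ) (h : ρ ≤ σ) {a : ℝ}
    (ha : a ∈ Set.Ioc 0 1) :
    (mpow ρ (a / 2) * mpow σ (-(a / 2)))ᴴ * (mpow ρ (a / 2) * mpow σ (-(a / 2))) ≤ 1 := by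
  have ha0 := ha.1
  set S := mpow σ (-(a / 2))
  have hS : Sᴴ = S := isHermitian_mpow _ _
  have hSS : S * mpow σ a * S = supportProj σ := by
    rw [mpow_mul_mpow (hρ.trans h) (by linarith), show -(a / 2) + a = a / 2 by ring,
      mpow_mul_mpow_neg (hρ.trans h) (by linarith)]
  calc (mpow ρ (a / 2) * S)ᴴ * (mpow ρ (a / 2) * S)
      = Sᴴ * (mpow ρ (a / 2) * mpow ρ (a / 2)) * S := by
        rw [conjTranspose_mul, isHermitian_mpow ρ]; simp only [mul_assoc]
    _ = Sᴴ * mpow ρ a * S := by rw [mpow_mul_mpow hρ (by linarith), add_halves]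
    _ ≤ Sᴴ * mpow σ a * S := star_left_conjugate_le_conjugate
        (mpow_le_mpow hρ h ⟨ha0.le, ha.2⟩) S
    _ ≤ 1 := by rw [hS, hSS]; exact supportProj_le_one σ

lemma traceR_mpow_sandwich_le_of_le (hρ : 0 ≤ ρ) (h : ρ ≤ σ) {p : ℝ} (hp : 1 < p) :
    traceR (mpow (sandwich p ρ σ) p) ≤ traceR ρ := by
  have hp0 : 0 < p := by linarith
  obtain ⟨a, ha⟩ : ∃ a : ℝ, a = (p - 1) / p := ⟨_, rfl⟩
  have ha0 : 0 < a := ha ▸ div_pos (by linarith) hp0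
  have ha1 : a + 1 / p = 1 := by rw [ha]; field_simp; ring
  have hexp : (1 - p) / (2 * p) = -(a / 2) := by rw [ha]; field_simp; ring
  set S := mpow σ (-(a / 2))
  set R := mpow ρ (a / 2)
  have hcontr : (R * S)ᴴ * (R * S) ≤ 1 := conjTranspose_mul_self_mpow_mul_mpow_neg_le_one hρ h
    ⟨ha0, by linarith [one_div_pos.2 hp0]⟩
  have hρR : R * mpow ρ (1 / p) * R = ρ := by
    rw [mpow_mul_mpow hρ (by positivity), mpow_mul_mpow hρ (by positivity),
      show a / 2 + 1 / p + a / 2 = 1 by linarith, mpow_one hρ.posSemidef.1]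
  have hsandwich : sandwich p ρ σ = (R * S)ᴴ * mpow ρ (1 / p) * (R * S) := by
    rw [sandwich, hexp, conjTranspose_mul, show Sᴴ = S from isHermitian_mpow _ _,
      show Rᴴ = R from isHermitian_mpow _ _]
    nth_rw 1 [← hρR]
    simp only [S, mul_assoc]
  calc traceR (mpow (sandwich p ρ σ) p) ≤ traceR (mpow (mpow ρ (1 / p)) p) := by
        rw [hsandwich]; exact traceR_mpow_conj_le (mpow_nonneg hρ _) hcontr hp.le
    _ = traceR ρ := by
        rw [mpow_mpow hρ, one_div_mul_cancel hp0.ne', mpow_one hρ.posSemidef.1]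

lemma traceR_mpow_sandwich_le (hρ : 0 ≤ ρ) (hσ : 0 ≤ σ) {c : ℝ} (hc : 0 < c) (h : ρ ≤ c • σ)
    {p : ℝ} (hp : 1 < p) : traceR (mpow (sandwich p ρ σ) p) ≤ c ^ (p - 1) * traceR ρ := by
  have hle := traceR_mpow_sandwich_le_of_le hρ h hp
  rw [sandwich_smul hσ p hc, mpow_smul (sandwich_nonneg hρ p) (by positivity), traceR_smul,
    ← Real.rpow_mul hc.le, div_mul_cancel₀ _ (by linarith)] at hle
  calc traceR (mpow (sandwich p ρ σ) p)
      = c ^ (p - 1) * (c ^ (1 - p) * traceR (mpow (sandwich p ρ σ) p)) := by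
        rw [← mul_assoc, ← Real.rpow_add hc]; simp
    _ ≤ c ^ (p - 1) * traceR ρ := by gcongr

lemma traceR_sandwich (p : ℝ) : traceR (sandwich p ρ σ) =
    traceR (ρ * cfc (fun x : ℝ => x ^ ((1 - p) / (2 * p)) * x ^ ((1 - p) / (2 * p))) σ) := by
  rw [cfc_mul _ _ σ (continuousOn_spectrum _ σ) (continuousOn_spectrum _ σ), sandwich, mul_assoc,
    traceR_mul_comm, mul_assoc]
  rfl

lemma traceR_mul_cfc_affine (hσ : σ.IsHermitian) (a b : ℝ) :
    traceR (ρ * cfc (fun x : ℝ => a + b * x) σ) = a * traceR ρ + b * traceR (ρ * σ) := by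
  rw [cfc_const_add a _ σ (continuousOn_spectrum _ σ) hσ.isSelfAdjoint,
    cfc_const_mul_id b σ hσ.isSelfAdjoint, mul_add, mul_smul_comm, traceR_add, traceR_smul,
    Algebra.algebraMap_eq_smul_one, mul_smul_comm, traceR_smul, mul_one]

/-- The tangent line inequality `(c x)^(-a) ≥ 1 - a (c x - 1)`, applied to the spectrum of `σ`. -/
lemma rpow_le_traceR_sandwich (hρ : 0 ≤ ρ) (hρ1 : traceR ρ = 1) (hσ : 0 ≤ σ) (h : suppLe ρ σ)
    {c : ℝ} (hc : 0 < c) (hcρσ : c * traceR (ρ * σ) ≤ 1) {p : ℝ} (hp : 1 < p) :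
    c ^ ((p - 1) / p) ≤ traceR (sandwich p ρ σ) := by
  obtain ⟨a, ha⟩ : ∃ a : ℝ, a = (p - 1) / p := ⟨_, rfl⟩
  have ha0 : 0 < a := ha ▸ div_pos (by linarith) (by linarith)
  have hexp : (1 - p) / (2 * p) + (1 - p) / (2 * p) = -a := by rw [ha]; field_simp; ring
  have htangent : ∀ x : ℝ, 0 < x → c ^ a * (1 + a) + -(c ^ a * (a * c)) * x ≤ x ^ (-a) := by
    intro x hx
    have hcx : 0 < c * x := mul_pos hc hx
    have h1 : 1 + a - a * (c * x) ≤ (c * x) ^ (-a) := by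
      rw [Real.rpow_def_of_pos hcx]
      nlinarith [Real.add_one_le_exp (Real.log (c * x) * -a), Real.log_le_sub_one_of_pos hcx]
    calc c ^ a * (1 + a) + -(c ^ a * (a * c)) * x = c ^ a * (1 + a - a * (c * x)) := by ring
      _ ≤ c ^ a * (c * x) ^ (-a) := by gcongr
      _ = x ^ (-a) := by
        rw [Real.mul_rpow hc.le hx.le, ← mul_assoc, ← Real.rpow_add hc, add_neg_cancel,
          Real.rpow_zero, one_mul]
  rw [traceR_sandwich, ← ha]
  calc c ^ a ≤ c ^ a * (1 + a) * traceR ρ + -(c ^ a * (a * c)) * traceR (ρ * σ) := by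
        rw [hρ1]
        nlinarith [mul_le_mul_of_nonneg_left hcρσ (mul_pos (Real.rpow_pos_of_pos hc a) ha0).le]
    _ = _ := (traceR_mul_cfc_affine hσ.posSemidef.1 _ _).symm
    _ ≤ _ := traceR_mul_cfc_le_of_suppLe hσ.posSemidef.1 hρ h fun x hx hx0 => by
        have hx' := (spectrum_nonneg_of_nonneg hσ hx).lt_of_ne' hx0
        rw [← Real.rpow_add hx', hexp]
        exact htangent x hx'

lemma traceR_mpow_pos {A : Mat n} (hA : 0 ≤ A) (hA0 : A ≠ 0) (p : ℝ) : 0 < traceR (mpow A p) := by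
  refine (traceR_nonneg (mpow_nonneg hA p)).lt_of_ne' fun h0 => hA0 ?_
  have hpow : mpow A p = 0 := by
    rw [← (mpow_nonneg hA p).posSemidef.trace_eq_zero_iff, ← coe_traceR (mpow_nonneg hA p), h0,
      Complex.ofReal_zero]
  have hspec : Set.EqOn (fun x : ℝ => x ^ p) (fun _ => 0) (spectrum ℝ A) :=
    (cfc_eq_cfc_iff_eqOn hA.isSelfAdjoint (continuousOn_spectrum _ A)
      (continuousOn_spectrum _ A)).1 (hpow.trans (cfc_const_zero ℝ A).symm)
  rw [← cfc_id' ℝ A hA.isSelfAdjoint, ← cfc_const_zero ℝ A]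
  exact cfc_congr fun x hx => ((Real.rpow_eq_zero_iff_of_nonneg
    (spectrum_nonneg_of_nonneg hA hx)).1 (hspec hx)).1

lemma traceR_mpow_sandwich_pos (hρ : 0 ≤ ρ) (hρ1 : traceR ρ = 1) (hσ : 0 ≤ σ) (h : suppLe ρ σ)
    {p : ℝ} (hp : 1 < p) : 0 < traceR (mpow (sandwich p ρ σ) p) := by
  have ht := traceR_mul_nonneg hρ hσ
  have hle := rpow_le_traceR_sandwich hρ hρ1 hσ h (c := (1 + traceR (ρ * σ))⁻¹) (by positivity)
    (by rw [inv_mul_le_one₀ (by positivity)]; linarith) hp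
  refine traceR_mpow_pos (sandwich_nonneg hρ p) (fun h0 => ?_) p
  rw [h0] at hle
  exact absurd hle (not_le.2 (by simpa [traceR] using by positivity))

lemma hasDerivAt_traceR_mul_mpow (hσ : 0 ≤ σ) (h : suppLe ρ σ) :
    HasDerivAt (fun a => traceR (ρ * mpow σ a)) (traceR (ρ * mlog σ)) 0 := by
  have hσh := hσ.posSemidef.1
  simp only [mpow, mlog, traceR_mul_cfc hσh]
  refine HasDerivAt.fun_sum fun i _ => ?_
  rcases (hσ.posSemidef.eigenvalues_nonneg i).eq_or_lt with hi | hi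
  · simpa [mul_eigenProj_eq_zero hσh h hi.symm, traceR] using hasDerivAt_const (0 : ℝ) (0 : ℝ)
  · simpa using ((Real.hasStrictDerivAt_const_rpow hi 0).hasDerivAt).mul_const
      (traceR (ρ * eigenProj hσh i))

/-- Differentiate `traceR (ρ * ρ ^ a) ≤ c ^ a * traceR (ρ * σ ^ a)`, an equality at `a = 0`. -/
lemma traceR_mul_mlog_le (hρ : 0 ≤ ρ) (hσ : 0 ≤ σ) {c : ℝ} (hc : 0 < c) (h : ρ ≤ c • σ) :
    traceR (ρ * mlog ρ) ≤ Real.log c * traceR ρ + traceR (ρ * mlog σ) := by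
  set d : ℝ → ℝ := fun a => c ^ a * traceR (ρ * mpow σ a) - traceR (ρ * mpow ρ a)
  have hd0 : d 0 = 0 := by simp [d, mpow_zero, hρ.posSemidef.1, hσ.posSemidef.1]
  have hderiv : HasDerivAt d
      (Real.log c * traceR ρ + traceR (ρ * mlog σ) - traceR (ρ * mlog ρ)) 0 := by
    have hcpow := (Real.hasStrictDerivAt_const_rpow hc 0).hasDerivAt
    simpa [mpow_zero hσ.posSemidef.1] using (hcpow.fun_mul
      (hasDerivAt_traceR_mul_mpow hσ (suppLe_of_le_smul hρ h))).fun_sub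
      (hasDerivAt_traceR_mul_mpow hρ fun _ => id)
  have hslope : ∀ a ∈ Set.Ioc (0 : ℝ) 1, 0 ≤ slope d 0 a := by
    intro a ha
    have hmono := traceR_mul_le_mul_left hρ (mpow_le_mpow hρ h ⟨ha.1.le, ha.2⟩)
    rw [mpow_smul hσ hc.le, mul_smul_comm, traceR_smul] at hmono
    rw [slope_def_field, hd0]
    exact div_nonneg (by simpa [d] using hmono) (by simpa using ha.1.le)
  have hlim := (hasDerivWithinAt_iff_tendsto_slope' (s := Set.Ioi 0) (by simp)).1
    hderiv.hasDerivWithinAt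
  have := ge_of_tendsto hlim (Filter.eventually_of_mem (Ioc_mem_nhdsGT one_pos) hslope)
  linarith

lemma traceR_mul_mlog_le_neg_log (hρ : 0 ≤ ρ) (hρ1 : traceR ρ = 1) (hσ : 0 ≤ σ) (h : suppLe ρ σ)
    {c : ℝ} (hc : 0 < c) (hcρσ : c * traceR (ρ * σ) ≤ 1) :
    traceR (ρ * mlog σ) ≤ -Real.log c := by
  have hle := traceR_mul_cfc_le_of_suppLe hσ.posSemidef.1 hρ h (f := Real.log)
    (g := fun x => (-1 - Real.log c) + c * x) fun x hx hx0 => by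
      have hx' := (spectrum_nonneg_of_nonneg hσ hx).lt_of_ne' hx0
      have := Real.log_le_sub_one_of_pos (mul_pos hc hx')
      rw [Real.log_mul hc.ne' hx0] at this
      linarith
  rw [traceR_mul_cfc_affine hσ.posSemidef.1, hρ1] at hle
  rw [mlog]
  linarith

end Comparison

/-! ### Bounds on relative entropies -/

section RankOne

lemma spectrum_of_mul_self_eq_smul {X : Mat n} (hX : X.IsHermitian) {t : ℝ} (h : X * X = t • X)
    {x : ℝ} (hx : x ∈ spectrum ℝ X) : x = 0 ∨ x = t := by
  have hcfc : cfc (fun x : ℝ => x * x) X = cfc (fun x : ℝ => t * x) X := by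
    rw [cfc_mul _ _ X (continuousOn_spectrum _ X) (continuousOn_spectrum _ X),
      cfc_const_mul_id t X hX.isSelfAdjoint, cfc_id' ℝ X hX.isSelfAdjoint, h]
  have hsq : x * x = t * x := (cfc_eq_cfc_iff_eqOn hX.isSelfAdjoint (continuousOn_spectrum _ X)
    (continuousOn_spectrum _ X)).1 hcfc hx
  rcases eq_or_ne x 0 with h0 | h0
  · exact .inl h0
  · exact .inr (mul_right_cancel₀ h0 hsq)

/-- The rank-one positive matrix `|ψ⟩⟨ψ|`; for a unit vector this is a pure state. -/
def outer (ψ : n → ℂ) : Mat n := vecMulVec ψ (star ψ)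

lemma outer_nonneg (ψ : n → ℂ) : 0 ≤ outer ψ := (posSemidef_vecMulVec_self_star ψ).nonneg

lemma outer_smul (a : ℝ) (ψ : n → ℂ) : outer (a • ψ) = a ^ 2 • outer ψ := by
  rw [outer, star_smul, star_trivial, smul_vecMulVec, vecMulVec_smul, smul_smul, ← sq, outer]

lemma mul_outer_mul_conjTranspose {m : Type*} [Fintype m] [DecidableEq m] (A : Matrix m n ℂ)
    (ψ : n → ℂ) : A * outer ψ * Aᴴ = outer (A *ᵥ ψ) := by
  rw [outer, outer, mul_vecMulVec, vecMulVec_mul, star_mulVec]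

lemma outer_mul_self (ψ : n → ℂ) : outer ψ * outer ψ = traceR (outer ψ) • outer ψ := by
  have htrace : star ψ ⬝ᵥ ψ = (traceR (outer ψ) : ℂ) := by
    rw [coe_traceR (outer_nonneg ψ), outer, trace_vecMulVec, dotProduct_comm]
  nth_rw 1 2 [outer]
  rw [vecMulVec_mul_vecMulVec, htrace, vecMulVec_smul, ← outer]
  exact Complex.coe_smul _ _

lemma traceR_mpow_outer (ψ : n → ℂ) {p : ℝ} (hp : p ≠ 0) :
    traceR (mpow (outer ψ) p) = traceR (outer ψ) ^ p := by
  have hψ := (outer_nonneg ψ).posSemidef.1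
  set t := traceR (outer ψ) with ht
  have ht0 : 0 ≤ t := traceR_nonneg (outer_nonneg ψ)
  have hmpow : mpow (outer ψ) p = t ^ (p - 1) • outer ψ := by
    rw [← cfc_const_mul_id (t ^ (p - 1)) (outer ψ) hψ.isSelfAdjoint]
    refine cfc_congr fun x hx => ?_
    rcases spectrum_of_mul_self_eq_smul hψ (outer_mul_self ψ) hx with rfl | rfl
    · simp [hp]
    · rw [← Real.rpow_add_one' ht0 (by simpa using hp), sub_add_cancel]
  rw [hmpow, traceR_smul, ← ht, ← Real.rpow_add_one' ht0 (by simpa using hp), sub_add_cancel]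

lemma mlog_outer {ψ : n → ℂ} (hψ : traceR (outer ψ) = 1) : mlog (outer ψ) = 0 := by
  rw [← cfc_const_zero ℝ (outer ψ)]
  refine cfc_congr fun x hx => ?_
  rcases spectrum_of_mul_self_eq_smul (outer_nonneg ψ).posSemidef.1 (outer_mul_self ψ) hx with
    rfl | rfl
  · simp
  · simp [hψ]

end RankOne

section RelativeEntropy

variable {ρ σ : Mat n}

lemma IsDensity.traceR_eq_one (hρ : IsDensity ρ) : traceR ρ = 1 := by
  rw [traceR, hρ.2, Complex.one_re]

lemma IsDensity.one_le_of_le_smul (hρ : IsDensity ρ) (hσ : IsDensity σ) {c : ℝ}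
    (h : ρ ≤ c • σ) : 1 ≤ c := by
  simpa [traceR_smul, hρ.traceR_eq_one, hσ.traceR_eq_one] using traceR_mono h

lemma Dinf_le_log (hρ : IsDensity ρ) (hσ : IsDensity σ) {c : ℝ} (h : ρ ≤ c • σ) :
    Dinf ρ σ ≤ Real.log c := by
  have hc0 : 0 ≤ c := zero_le_one.trans (hρ.one_le_of_le_smul hσ h)
  have hmem : c ∈ {c : ℝ | 0 ≤ c ∧ (c • σ - ρ).PosSemidef} := ⟨hc0, le_iff.1 h⟩
  have hone : 1 ≤ sInf {c : ℝ | 0 ≤ c ∧ (c • σ - ρ).PosSemidef} :=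
    le_csInf ⟨c, hmem⟩ fun _ hd => hρ.one_le_of_le_smul hσ (le_iff.2 hd.2)
  rw [Dinf, if_pos ⟨c, hmem⟩, EReal.coe_le_coe_iff]
  exact Real.log_le_log (one_pos.trans_le hone) (csInf_le ⟨0, fun _ hd => hd.1⟩ hmem)

lemma DU_le_log (hρ : IsDensity ρ) (hσ : IsDensity σ) {c : ℝ} (h : ρ ≤ c • σ) :
    DU ρ σ ≤ Real.log c := by
  have hle := traceR_mul_mlog_le hρ.1.nonneg hσ.1.nonneg
    (one_pos.trans_le (hρ.one_le_of_le_smul hσ h)) h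
  rw [hρ.traceR_eq_one] at hle
  rw [DU, if_pos (suppLe_of_le_smul hρ.1.nonneg h), EReal.coe_le_coe_iff, traceR_sub]
  linarith

lemma Dp_of_one_lt {p : ℝ≥0∞} (hp : 1 < p) (hp' : p ≠ ⊤) (hρ : IsDensity ρ) (hσ : IsDensity σ)
    (h : suppLe ρ σ) : Dp p ρ σ =
      ((p.toReal - 1)⁻¹ * Real.log (traceR (mpow (sandwich p.toReal ρ σ) p.toReal)) : ℝ) := by
  have hp1 : 1 < p.toReal := by simpa using (ENNReal.toReal_lt_toReal ENNReal.one_ne_top hp').2 hp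
  rw [Dp, if_neg hp', if_neg hp.ne', if_neg (fun h' => h'.2 h), if_neg]
  exact (traceR_mpow_sandwich_pos hρ.1.nonneg hρ.traceR_eq_one hσ.1.nonneg h hp1).ne'

lemma Dp_le_log {p : ℝ≥0∞} (hp : 1 ≤ p) (hρ : IsDensity ρ) (hσ : IsDensity σ) {c : ℝ}
    (h : ρ ≤ c • σ) : Dp p ρ σ ≤ Real.log c := by
  by_cases htop : p = ⊤
  · simpa [Dp, htop] using Dinf_le_log hρ hσ h
  rcases hp.eq_or_lt with rfl | hp
  · simpa [Dp] using DU_le_log hρ hσ h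
  have hp1 : 1 < p.toReal := by simpa using (ENNReal.toReal_lt_toReal ENNReal.one_ne_top htop).2 hp
  have hc : 0 < c := one_pos.trans_le (hρ.one_le_of_le_smul hσ h)
  have hs := suppLe_of_le_smul hρ.1.nonneg h
  have hle := traceR_mpow_sandwich_le hρ.1.nonneg hσ.1.nonneg hc h hp1
  rw [hρ.traceR_eq_one, mul_one] at hle
  rw [Dp_of_one_lt hp htop hρ hσ hs, EReal.coe_le_coe_iff, inv_mul_le_iff₀ (by linarith),
    ← Real.log_rpow hc]
  exact Real.log_le_log
    (traceR_mpow_sandwich_pos hρ.1.nonneg hρ.traceR_eq_one hσ.1.nonneg hs hp1) hle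

section PureState

variable {ψ : n → ℂ} {c : ℝ}

lemma log_le_Dinf_outer (hψ : traceR (outer ψ) = 1) (hc : 0 < c)
    (h : c * traceR (outer ψ * σ) ≤ 1) : Real.log c ≤ Dinf (outer ψ) σ := by
  rw [Dinf]
  split_ifs with hne
  · rw [EReal.coe_le_coe_iff]
    refine Real.log_le_log hc (le_csInf hne fun d hd => ?_)
    have hle := traceR_mul_le_mul_left (outer_nonneg ψ) (le_iff.2 hd.2)
    rw [outer_mul_self, hψ, one_smul, hψ, mul_smul_comm, traceR_smul] at hle
    calc c ≤ c * (d * traceR (outer ψ * σ)) := le_mul_of_one_le_right hc.le hle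
      _ = d * (c * traceR (outer ψ * σ)) := by ring
      _ ≤ d := mul_le_of_le_one_right hd.1 h
  · exact le_top

lemma log_le_DU_outer (hψ : traceR (outer ψ) = 1) (hσ : 0 ≤ σ) (hc : 0 < c)
    (h : c * traceR (outer ψ * σ) ≤ 1) : Real.log c ≤ DU (outer ψ) σ := by
  rw [DU]
  split_ifs with hs
  · rw [EReal.coe_le_coe_iff, mlog_outer hψ, mul_zero, zero_sub, ← sub_zero (Real.log c)]
    have hle := traceR_mul_mlog_le_neg_log (outer_nonneg ψ) hψ hσ hs hc h
    rw [traceR_neg]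
    linarith
  · exact le_top

lemma log_le_Dp_outer {p : ℝ≥0∞} (hp : 1 ≤ p) (hψ : IsDensity (outer ψ)) (hσ : IsDensity σ)
    (hc : 0 < c) (h : c * traceR (outer ψ * σ) ≤ 1) : Real.log c ≤ Dp p (outer ψ) σ := by
  have hψ1 := hψ.traceR_eq_one
  by_cases htop : p = ⊤
  · simpa [Dp, htop] using log_le_Dinf_outer hψ1 hc h
  rcases hp.eq_or_lt with rfl | hp
  · simpa [Dp] using log_le_DU_outer hψ1 hσ.1.nonneg hc h
  have hp1 : 1 < p.toReal := by simpa using (ENNReal.toReal_lt_toReal ENNReal.one_ne_top htop).2 hp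
  by_cases hs : suppLe (outer ψ) σ
  · rw [Dp_of_one_lt hp htop hψ hσ hs, EReal.coe_le_coe_iff]
    generalize p.toReal = q at hp1
    have hle := rpow_le_traceR_sandwich (outer_nonneg ψ) hψ1 hσ.1.nonneg hs hc h hp1
    have hpure : sandwich q (outer ψ) σ = outer (mpow σ ((1 - q) / (2 * q)) *ᵥ ψ) := by
      rw [← mul_outer_mul_conjTranspose, isHermitian_mpow]
      rfl
    rw [hpure] at hle ⊢
    rw [traceR_mpow_outer _ (by linarith), le_inv_mul_iff₀ (by linarith), ← Real.log_rpow hc]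
    refine Real.log_le_log (by positivity) ?_
    calc c ^ (q - 1) = (c ^ ((q - 1) / q)) ^ q := by
          rw [← Real.rpow_mul hc.le, div_mul_cancel₀ _ (by linarith)]
      _ ≤ _ := by gcongr
  · simp [Dp, htop, hp.ne', hp1, hs]

end PureState

end RelativeEntropy

/-! ### Tensor products -/

section TensorProduct

variable {m : Type*} [Fintype m] [DecidableEq m]

lemma kronecker_induction {motive : Mat (m × n) → Prop} (kronecker : ∀ x y, motive (x ⊗ₖ y))
    (add : ∀ X Y, motive X → motive Y → motive (X + Y)) (X : Mat (m × n)) : motive X := by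
  obtain ⟨t, rfl⟩ := (kroneckerLinearEquiv m m n n ℂ).surjective X
  induction t with
  | zero => simpa using kronecker 0 0
  | tmul x y => exact kronecker x y
  | add s t hs ht => simpa only [map_add] using add _ _ hs ht

/-- The map `Φ ⊗ Ψ` on `M_m ⊗ M_n = M_{m × n}`. -/
def tensorMap (Φ : Mat m →ₗ[ℂ] Mat m) (Ψ : Mat n →ₗ[ℂ] Mat n) :
    Mat (m × n) →ₗ[ℂ] Mat (m × n) :=
  (kroneckerLinearEquiv m m n n ℂ).conj (TensorProduct.map Φ Ψ)

lemma tensorMap_kronecker (Φ : Mat m →ₗ[ℂ] Mat m) (Ψ : Mat n →ₗ[ℂ] Mat n) (x : Mat m)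
    (y : Mat n) : tensorMap Φ Ψ (x ⊗ₖ y) = Φ x ⊗ₖ Ψ y := by
  simp [tensorMap, LinearEquiv.conj_apply]

lemma kronecker_le_kronecker {A₁ B₁ : Mat m} {A₂ B₂ : Mat n} (hA₁ : 0 ≤ A₁) (h₁ : A₁ ≤ B₁)
    (hA₂ : 0 ≤ A₂) (h₂ : A₂ ≤ B₂) : A₁ ⊗ₖ A₂ ≤ B₁ ⊗ₖ B₂ := by
  have hdiff : B₁ ⊗ₖ B₂ - A₁ ⊗ₖ A₂ = (B₁ - A₁) ⊗ₖ B₂ + A₁ ⊗ₖ (B₂ - A₂) := by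
    ext i j
    simp
    ring
  rw [le_iff, hdiff]
  exact ((le_iff.1 h₁).kronecker (hA₂.trans h₂).posSemidef).add
    (hA₁.posSemidef.kronecker (le_iff.1 h₂))

lemma tensorMap_id_conj {k l : Type*} [Fintype k] [DecidableEq k] [Fintype l] [DecidableEq l]
    (Ψ : Mat n →ₗ[ℂ] Mat n) (T : Matrix k l ℂ) (X : Mat (l × n)) :
    tensorMap .id Ψ ((T ⊗ₖ (1 : Mat n)) * X * (T ⊗ₖ (1 : Mat n))ᴴ) =
      (T ⊗ₖ (1 : Mat n)) * tensorMap .id Ψ X * (T ⊗ₖ (1 : Mat n))ᴴ := by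
  induction X using kronecker_induction with
  | kronecker x y =>
    simp only [conjTranspose_kronecker, conjTranspose_one, ← mul_kronecker_mul, one_mul, mul_one,
      tensorMap_kronecker, LinearMap.id_apply]
  | add X Y hX hY => simp only [Matrix.mul_add, Matrix.add_mul, map_add, hX, hY]

/-- The tensor product `N₁ ⊗ N₂` of *-subalgebras. -/
def tensorAlg (N₁ : StarSubalgebra ℂ (Mat m)) (N₂ : StarSubalgebra ℂ (Mat n)) :
    StarSubalgebra ℂ (Mat (m × n)) where
  carrier := tensorSpan (N₁ : Set (Mat m)) (N₂ : Set (Mat n))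
  add_mem' := add_mem
  mul_mem' {X Y} hX hY := by
    refine Submodule.span_induction₂ (p := fun X Y _ _ => X * Y ∈ tensorSpan _ _) ?_
      (fun _ _ => ?_) (fun _ _ => ?_) (fun _ _ _ _ _ _ h h' => ?_) (fun _ _ _ _ _ _ h h' => ?_)
      (fun c _ _ _ _ h => ?_) (fun c _ _ _ _ h => ?_) hX hY
    · rintro _ _ ⟨x, hx, y, hy, rfl⟩ ⟨x', hx', y', hy', rfl⟩
      rw [← mul_kronecker_mul]
      exact Submodule.subset_span ⟨_, mul_mem hx hx', _, mul_mem hy hy', rfl⟩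
    · rw [zero_mul]; exact zero_mem _
    · rw [mul_zero]; exact zero_mem _
    · rw [add_mul]; exact add_mem h h'
    · rw [mul_add]; exact add_mem h h'
    · rw [smul_mul_assoc]; exact Submodule.smul_mem _ c h
    · rw [mul_smul_comm]; exact Submodule.smul_mem _ c h
  algebraMap_mem' c := by
    rw [Algebra.algebraMap_eq_smul_one, ← one_kronecker_one]
    exact Submodule.smul_mem _ c (Submodule.subset_span ⟨1, one_mem N₁, 1, one_mem N₂, rfl⟩)
  star_mem' {X} hX := by
    refine Submodule.span_induction (p := fun X _ => star X ∈ tensorSpan _ _) ?_ ?_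
      (fun _ _ _ _ h h' => ?_) (fun c _ _ h => ?_) hX
    · rintro _ ⟨x, hx, y, hy, rfl⟩
      rw [star_eq_conjTranspose, conjTranspose_kronecker]
      exact Submodule.subset_span ⟨_, star_mem hx, _, star_mem hy, rfl⟩
    · rw [star_zero]; exact zero_mem _
    · rw [star_add]; exact add_mem h h'
    · rw [star_smul]; exact Submodule.smul_mem _ _ h

end TensorProduct

/-! ### Conditional expectations -/

section CondExp

lemma exists_isCondExp (V : Submodule ℂ (Mat n)) : ∃ E, IsCondExp (V : Set (Mat n)) E := by
  let := toMatrixNormedAddCommGroup (1 : Mat n) PosDef.one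
  let := toMatrixInnerProductSpace (1 : Mat n) PosSemidef.one
  have inner_eq (x y : Mat n) : inner ℂ x y = (xᴴ * y).trace := by
    change (y * 1 * xᴴ).trace = _
    rw [mul_one, trace_mul_comm]
  refine ⟨V.starProjection, V.starProjection_apply_mem,
    fun x hx => Submodule.starProjection_eq_self_iff.2 hx, fun x y hy => ?_⟩
  have horth := V.starProjection_inner_eq_zero x y hy
  rw [inner_sub_left, sub_eq_zero, inner_eq, inner_eq] at horth
  exact horth.symm

lemma isCondExp_id : IsCondExp (Set.univ : Set (Mat n)) .id :=
  ⟨fun _ => trivial, fun _ _ => rfl, fun _ _ _ => rfl⟩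

lemma IsCondExp.tensorMap {m : Type*} [Fintype m] [DecidableEq m] {S₁ : Set (Mat m)}
    {S₂ : Set (Mat n)} {E₁ : Mat m →ₗ[ℂ] Mat m} {E₂ : Mat n →ₗ[ℂ] Mat n}
    (h₁ : IsCondExp S₁ E₁) (h₂ : IsCondExp S₂ E₂) :
    IsCondExp (tensorSpan S₁ S₂) (tensorMap E₁ E₂) := by
  refine ⟨fun X => ?_, fun X hX => ?_, fun X Y hY => ?_⟩
  · induction X using kronecker_induction with
    | kronecker x y =>
      rw [tensorMap_kronecker]
      exact Submodule.subset_span ⟨_, h₁.1 x, _, h₂.1 y, rfl⟩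
    | add X Y hX hY =>
      rw [map_add]
      exact Submodule.add_mem _ hX hY
  · refine LinearMap.eqOn_span (f := GJL.tensorMap E₁ E₂) (g := .id) ?_ hX
    rintro _ ⟨x, hx, y, hy, rfl⟩
    rw [tensorMap_kronecker, h₁.2.1 x hx, h₂.2.1 y hy, LinearMap.id_apply]
  · induction X using kronecker_induction with
    | kronecker x y =>
      refine LinearMap.eqOn_span (f := traceLinearMap _ ℂ ℂ ∘ₗ LinearMap.mulLeft ℂ _)
        (g := traceLinearMap _ ℂ ℂ ∘ₗ LinearMap.mulLeft ℂ _) ?_ hY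
      rintro _ ⟨x', hx', y', hy', rfl⟩
      simp only [tensorMap_kronecker, LinearMap.comp_apply, LinearMap.mulLeft_apply,
        traceLinearMap_apply, conjTranspose_kronecker, ← mul_kronecker_mul, trace_kronecker,
        h₁.2.2 x x' hx', h₂.2.2 y y' hy']
    | add X Z hX hZ =>
      simp only [map_add, conjTranspose_add, add_mul, trace_add, hX, hZ]

section StarSubalgebra

variable {N : StarSubalgebra ℂ (Mat n)} {E : Mat n →ₗ[ℂ] Mat n}

lemma cfc_mem_starSubalgebra (f : ℝ → ℝ) {X : Mat n} (hX : X ∈ N) : cfc f X ∈ N := by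
  have hN : IsClosed (N : Set (Mat n)) :=
    (Subalgebra.toSubmodule N.toSubalgebra).closed_of_finiteDimensional
  exact cfc_mem (𝕜' := ℂ) f hX

variable (hE : IsCondExp (N : Set (Mat n)) E)

include hE

lemma IsCondExp.mem (x : Mat n) : E x ∈ N := hE.1 x

lemma IsCondExp.trace_mul (x : Mat n) {y : Mat n} (hy : y ∈ N) :
    (E x * y).trace = (x * y).trace := by
  have h := congrArg star (hE.2.2 x (star y) (star_mem hy))
  simpa only [← trace_conjTranspose, conjTranspose_mul, conjTranspose_conjTranspose,
    star_eq_conjTranspose, trace_mul_comm y] using h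

lemma IsCondExp.traceR_mul (x : Mat n) {y : Mat n} (hy : y ∈ N) :
    traceR (E x * y) = traceR (x * y) := by
  rw [traceR, traceR, hE.trace_mul x hy]

lemma IsCondExp.trace_eq (x : Mat n) : (E x).trace = x.trace := by
  simpa only [mul_one] using hE.trace_mul x (one_mem N)

lemma IsCondExp.eq_of_trace_mul {x z : Mat n} (hz : z ∈ N)
    (h : ∀ y ∈ N, (z * y).trace = (x * y).trace) : E x = z := by
  have hstar : star (E x - z) ∈ N := star_mem (sub_mem (hE.mem x) hz)
  rw [← sub_eq_zero, ← trace_mul_conjTranspose_self_eq_zero_iff, ← star_eq_conjTranspose,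
    sub_mul, trace_sub, hE.trace_mul x hstar, h _ hstar, sub_self]

lemma IsCondExp.map_conjTranspose (x : Mat n) : E xᴴ = (E x)ᴴ := by
  refine hE.eq_of_trace_mul (star_mem (hE.mem x)) fun y hy => ?_
  exact hE.2.2 x y hy

lemma IsCondExp.map_mul_mul {a b : Mat n} (ha : a ∈ N) (hb : b ∈ N) (x : Mat n) :
    E (a * x * b) = a * E x * b := by
  refine hE.eq_of_trace_mul (mul_mem (mul_mem ha (hE.mem x)) hb) fun y hy => ?_
  calc (a * E x * b * y).trace = (E x * (b * y * a)).trace := by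
        simp only [mul_assoc]; rw [trace_mul_comm]; simp only [mul_assoc]
    _ = (x * (b * y * a)).trace := hE.trace_mul x (mul_mem (mul_mem hb hy) ha)
    _ = (a * x * b * y).trace := by
        simp only [mul_assoc]; rw [trace_mul_comm a]; simp only [mul_assoc]

lemma IsCondExp.nonneg {x : Mat n} (hx : 0 ≤ x) : 0 ≤ E x := by
  have hsa : IsSelfAdjoint (E x) := by
    rw [IsSelfAdjoint, star_eq_conjTranspose, ← hE.map_conjTranspose, hx.posSemidef.1]
  have hneg_mem : (E x)⁻ ∈ N := by
    rw [CFC.negPart_def, cfcₙ_eq_cfc]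
    exact cfc_mem_starSubalgebra _ (hE.mem x)
  have hneg : E x * (E x)⁻ = -((E x)⁻ * (E x)⁻) := by
    nth_rw 1 [← CFC.posPart_sub_negPart (E x) hsa]
    rw [sub_mul, CFC.posPart_mul_negPart, zero_sub]
  have hneg_nonneg : 0 ≤ (E x)⁻ := CFC.negPart_nonneg (E x)
  have hsq_nonneg := (posSemidef_self_mul_conjTranspose (E x)⁻).nonneg
  have hsq : traceR ((E x)⁻ * (E x)⁻ᴴ) = 0 := by
    refine le_antisymm ?_ (traceR_nonneg hsq_nonneg)
    have := traceR_mul_nonneg hx hneg_nonneg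
    rw [← hE.traceR_mul x hneg_mem, hneg, traceR_neg] at this
    rw [hneg_nonneg.posSemidef.1.eq]
    exact neg_nonneg.1 this
  rw [← CFC.negPart_eq_zero_iff (E x) hsa, ← trace_mul_conjTranspose_self_eq_zero_iff,
    ← coe_traceR hsq_nonneg, hsq, Complex.ofReal_zero]

end StarSubalgebra

end CondExp

section Certificate

lemma outer_le_smul_one (ψ : n → ℂ) : outer ψ ≤ traceR (outer ψ) • (1 : Mat n) := by
  have hψ := (outer_nonneg ψ).posSemidef.1
  rw [← Algebra.algebraMap_eq_smul_one]
  refine le_algebraMap_of_spectrum_le (fun x hx => ?_) hψ.isSelfAdjoint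
  rcases spectrum_of_mul_self_eq_smul hψ (outer_mul_self ψ) hx with rfl | rfl
  · exact traceR_nonneg (outer_nonneg ψ)
  · exact le_rfl

lemma traceR_outer_eq_zero_iff {ψ : n → ℂ} : traceR (outer ψ) = 0 ↔ ψ = 0 := by
  rw [← Complex.ofReal_eq_zero, coe_traceR (outer_nonneg ψ), outer, trace_vecMulVec,
    dotProduct_comm, dotProduct_star_self_eq_zero]

section

variable {A : StarSubalgebra ℂ (Mat n)} {F : Mat n →ₗ[ℂ] Mat n}
  (hF : IsCondExp (A : Set (Mat n)) F)

include hF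

lemma IsCondExp.traceR_eq (x : Mat n) : traceR (F x) = traceR x := by
  rw [traceR, traceR, hF.trace_eq]

lemma IsCondExp.supportProj_mulVec (Ω : n → ℂ) : supportProj (F (outer Ω)) *ᵥ Ω = Ω := by
  set C := F (outer Ω)
  set Q := 1 - supportProj C
  have hC : C.IsHermitian := (hF.nonneg (outer_nonneg Ω)).posSemidef.1
  have hQ : Q.IsHermitian := isHermitian_one.sub (isHermitian_supportProj C)
  have hQ_mem : Q ∈ A := sub_mem (one_mem A) (cfc_mem_starSubalgebra _ (hF.mem _))
  have hQC : Q * C = 0 := by rw [sub_mul, one_mul, supportProj_mul_self hC, sub_self]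
  have hzero : Q *ᵥ Ω = 0 := by
    rw [← traceR_outer_eq_zero_iff, ← mul_outer_mul_conjTranspose, hQ.eq, ← hF.traceR_eq,
      hF.map_mul_mul hQ_mem hQ_mem, hQC, zero_mul, traceR, trace_zero, Complex.zero_re]
  rw [sub_mulVec, one_mulVec, sub_eq_zero] at hzero
  exact hzero.symm

lemma IsCondExp.exists_outer_le (Ω : n → ℂ) :
    ∃ ψ, F (outer ψ) ≤ 1 ∧ outer Ω ≤ traceR (outer ψ) • F (outer Ω) := by
  have hC : 0 ≤ F (outer Ω) := hF.nonneg (outer_nonneg Ω)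
  have hΩ := hF.supportProj_mulVec Ω
  have hmem : F (outer Ω) ∈ A := hF.mem _
  generalize hCdef : F (outer Ω) = C at *
  set W := mpow C (-(1 / 2))
  set R := mpow C (1 / 2)
  have hRW : R * W = supportProj C := mpow_mul_mpow_neg hC (by norm_num)
  have hRR : R * R = C := by
    rw [mpow_mul_mpow hC (by norm_num), add_halves, mpow_one hC.posSemidef.1]
  have hR : Rᴴ = R := isHermitian_mpow C _
  have hW : Wᴴ = W := isHermitian_mpow C _
  have hWR : W * R = supportProj C := by
    rw [← (isHermitian_supportProj C).eq, ← hRW, conjTranspose_mul, hR, hW]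
  have hW_mem : W ∈ A := cfc_mem_starSubalgebra _ hmem
  refine ⟨W *ᵥ Ω, ?_, ?_⟩
  · rw [← mul_outer_mul_conjTranspose, hW, hF.map_mul_mul hW_mem hW_mem, hCdef]
    calc W * C * W = (W * R) * (R * W) := by rw [← hRR]; simp only [mul_assoc]
      _ = supportProj C := by rw [hRW, hWR, supportProj_mul_supportProj]
      _ ≤ 1 := supportProj_le_one C
  · calc outer Ω = R * outer (W *ᵥ Ω) * Rᴴ := by
          rw [mul_outer_mul_conjTranspose, mulVec_mulVec, hRW, hΩ]
      _ ≤ R * (traceR (outer (W *ᵥ Ω)) • (1 : Mat n)) * Rᴴ :=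
          star_right_conjugate_le_conjugate (outer_le_smul_one _) R
      _ = traceR (outer (W *ᵥ Ω)) • C := by
          rw [mul_smul_comm, mul_one, smul_mul_assoc, hR, hRR]

end

end Certificate

/-! ### Index certificates -/

section CbIndex

section Shuffle

variable {k l m : Type*} [Fintype k] [DecidableEq k] [Fintype l] [DecidableEq l] [Fintype m]
  [DecidableEq m]

lemma tensorMap_id_id : tensorMap (.id : Mat m →ₗ[ℂ] Mat m) (.id : Mat n →ₗ[ℂ] Mat n) = .id := by
  rw [tensorMap, TensorProduct.map_id, LinearEquiv.conj_id]

/-- The element `X ⊗ Y` of `(M_k ⊗ M_m) ⊗ (M_l ⊗ M_n)` with its factors rearranged to lie in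
`(M_k ⊗ M_l) ⊗ (M_m ⊗ M_n)`. -/
def shuffle (X : Mat (k × m)) (Y : Mat (l × n)) : Mat ((k × l) × (m × n)) :=
  (X ⊗ₖ Y).submatrix (Equiv.prodProdProdComm k l m n) (Equiv.prodProdProdComm k l m n)

/-- The vector analogue of `shuffle`. -/
def shuffleVec (φ : k × m → ℂ) (ψ : l × n → ℂ) : (k × l) × (m × n) → ℂ :=
  fun x => φ (x.1.1, x.2.1) * ψ (x.1.2, x.2.2)

lemma shuffle_outer (φ : k × m → ℂ) (ψ : l × n → ℂ) :
    shuffle (outer φ) (outer ψ) = outer (shuffleVec φ ψ) := by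
  ext i j
  simp [shuffle, shuffleVec, outer, vecMulVec_apply, mul_mul_mul_comm]

lemma shuffle_kronecker (x₁ : Mat k) (y₁ : Mat m) (x₂ : Mat l) (y₂ : Mat n) :
    shuffle (x₁ ⊗ₖ y₁) (x₂ ⊗ₖ y₂) = (x₁ ⊗ₖ x₂) ⊗ₖ (y₁ ⊗ₖ y₂) := by
  ext i j
  simp [shuffle, mul_mul_mul_comm]

lemma shuffle_add_left (X X' : Mat (k × m)) (Y : Mat (l × n)) :
    shuffle (X + X') Y = shuffle X Y + shuffle X' Y := by
  rw [shuffle, add_kronecker]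
  rfl

lemma shuffle_add_right (X : Mat (k × m)) (Y Y' : Mat (l × n)) :
    shuffle X (Y + Y') = shuffle X Y + shuffle X Y' := by
  rw [shuffle, kronecker_add]
  rfl

lemma shuffle_smul_smul (c d : ℝ) (X : Mat (k × m)) (Y : Mat (l × n)) :
    shuffle (c • X) (d • Y) = (c * d) • shuffle X Y := by
  rw [shuffle, smul_kronecker, kronecker_smul, smul_smul]
  rfl

lemma shuffle_one_one : shuffle (1 : Mat (k × m)) (1 : Mat (l × n)) = 1 := by
  rw [shuffle, one_kronecker_one, submatrix_one_equiv]

lemma trace_shuffle (X : Mat (k × m)) (Y : Mat (l × n)) :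
    (shuffle X Y).trace = X.trace * Y.trace := by
  rw [← trace_kronecker]
  exact (Equiv.prodProdProdComm k l m n).sum_comp fun i => (X ⊗ₖ Y) i i

lemma shuffle_le_shuffle {X₁ Y₁ : Mat (k × m)} {X₂ Y₂ : Mat (l × n)} (hX₁ : 0 ≤ X₁)
    (h₁ : X₁ ≤ Y₁) (hX₂ : 0 ≤ X₂) (h₂ : X₂ ≤ Y₂) : shuffle X₁ X₂ ≤ shuffle Y₁ Y₂ :=
  le_iff.2 ((le_iff.1 (kronecker_le_kronecker hX₁ h₁ hX₂ h₂)).submatrix _)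

lemma tensorMap_shuffle (Φ₁ : Mat k →ₗ[ℂ] Mat k) (Φ₂ : Mat l →ₗ[ℂ] Mat l)
    (Ψ₁ : Mat m →ₗ[ℂ] Mat m) (Ψ₂ : Mat n →ₗ[ℂ] Mat n) (X : Mat (k × m)) (Y : Mat (l × n)) :
    tensorMap (tensorMap Φ₁ Φ₂) (tensorMap Ψ₁ Ψ₂) (shuffle X Y) =
      shuffle (tensorMap Φ₁ Ψ₁ X) (tensorMap Φ₂ Ψ₂ Y) := by
  induction X using kronecker_induction with
  | kronecker x₁ y₁ =>
    induction Y using kronecker_induction with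
    | kronecker x₂ y₂ => simp only [shuffle_kronecker, tensorMap_kronecker]
    | add Y Y' hY hY' => simp only [shuffle_add_right, map_add, hY, hY']
  | add X X' hX hX' => simp only [shuffle_add_left, map_add, hX, hX']

end Shuffle

/-- The unnormalised maximally entangled vector `∑ i, eᵢ ⊗ eᵢ`. -/
def maxEnt : n × n → ℂ := fun x => if x.1 = x.2 then 1 else 0

omit [Fintype n] in
lemma shuffleVec_maxEnt {m : Type*} [DecidableEq m] :
    shuffleVec (maxEnt (n := m)) (maxEnt (n := n)) = maxEnt := by
  ext x
  simp [shuffleVec, maxEnt, Prod.ext_iff, ← ite_and, and_comm]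

lemma traceR_outer_maxEnt_pos [Nonempty n] : 0 < traceR (outer (maxEnt (n := n))) := by
  refine (traceR_nonneg (outer_nonneg _)).lt_of_ne' fun h => ?_
  obtain ⟨i⟩ := ‹Nonempty n›
  simpa [maxEnt] using congrFun (traceR_outer_eq_zero_iff.1 h) (i, i)

/-- A certificate that `c` is the smallest constant with `X ≤ c (id ⊗ E)(X)` for all `X ≥ 0` in
`M_k ⊗ M_n`, for all `k`: by `IsCbIndex.le_smul_tensorMap` the first condition says that `c` is
large enough, while `ψ` in the second one witnesses that no smaller constant will do. -/
structure IsCbIndex (E : Mat n →ₗ[ℂ] Mat n) (c : ℝ) : Prop where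
  outer_maxEnt_le : outer maxEnt ≤ c • tensorMap .id E (outer maxEnt)
  exists_vec : ∃ ψ : n × n → ℂ, traceR (outer ψ) = c ∧ tensorMap .id E (outer ψ) ∈ Set.Icc 0 1

lemma IsCondExp.id_tensorMap {k : Type*} [Fintype k] [DecidableEq k]
    {N : StarSubalgebra ℂ (Mat n)} {E : Mat n →ₗ[ℂ] Mat n} (hE : IsCondExp (N : Set (Mat n)) E) :
    IsCondExp (tensorAlg (⊤ : StarSubalgebra ℂ (Mat k)) N : Set (Mat (k × n)))
      (GJL.tensorMap .id E) :=
  isCondExp_id.tensorMap hE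

lemma IsCondExp.exists_isCbIndex {N : StarSubalgebra ℂ (Mat n)} {E : Mat n →ₗ[ℂ] Mat n}
    (hE : IsCondExp (N : Set (Mat n)) E) : ∃ c, IsCbIndex E c := by
  have hF := hE.id_tensorMap (k := n)
  obtain ⟨ψ, hψ, hmaxEnt⟩ := hF.exists_outer_le maxEnt
  exact ⟨_, hmaxEnt, ψ, rfl, hF.nonneg (outer_nonneg ψ), hψ⟩

namespace IsCbIndex

variable {E : Mat n →ₗ[ℂ] Mat n} {c : ℝ}

lemma pos [Nonempty n] (hc : IsCbIndex E c) : 0 < c := by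
  obtain ⟨ψ, hψ, -⟩ := hc.exists_vec
  refine (hψ ▸ traceR_nonneg (outer_nonneg ψ)).lt_of_ne' ?_
  rintro rfl
  have hle := traceR_mono hc.outer_maxEnt_le
  rw [zero_smul, traceR, traceR, trace_zero, Complex.zero_re] at hle
  exact traceR_outer_maxEnt_pos.not_ge hle

protected lemma tensorMap {m : Type*} [Fintype m] [DecidableEq m] {E₁ : Mat m →ₗ[ℂ] Mat m}
    {E₂ : Mat n →ₗ[ℂ] Mat n} {c₁ c₂ : ℝ} (h₁ : IsCbIndex E₁ c₁) (h₂ : IsCbIndex E₂ c₂) :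
    IsCbIndex (tensorMap E₁ E₂) (c₁ * c₂) where
  outer_maxEnt_le := by
    have hle := shuffle_le_shuffle (outer_nonneg _) h₁.outer_maxEnt_le (outer_nonneg _)
      h₂.outer_maxEnt_le
    rwa [shuffle_smul_smul, ← tensorMap_shuffle, tensorMap_id_id, shuffle_outer,
      shuffleVec_maxEnt] at hle
  exists_vec := by
    obtain ⟨ψ₁, hψ₁, hψ₁_nonneg, hψ₁_le⟩ := h₁.exists_vec
    obtain ⟨ψ₂, hψ₂, hψ₂_nonneg, hψ₂_le⟩ := h₂.exists_vec
    refine ⟨shuffleVec ψ₁ ψ₂, ?_, ?_, ?_⟩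
    · rw [← hψ₁, ← hψ₂, ← Complex.ofReal_inj, Complex.ofReal_mul]
      simp only [coe_traceR (outer_nonneg _), ← trace_shuffle, shuffle_outer]
    · rw [← tensorMap_id_id, ← shuffle_outer, tensorMap_shuffle]
      exact ((hψ₁_nonneg.posSemidef.kronecker hψ₂_nonneg.posSemidef).submatrix _).nonneg
    · rw [← tensorMap_id_id, ← shuffle_outer, tensorMap_shuffle, ← shuffle_one_one]
      exact shuffle_le_shuffle hψ₁_nonneg hψ₁_le hψ₂_nonneg hψ₂_le

variable {k : Type*} [Fintype k] [DecidableEq k]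

lemma outer_le_smul_tensorMap (hc : IsCbIndex E c) (φ : k × n → ℂ) :
    outer φ ≤ c • tensorMap .id E (outer φ) := by
  set T : Matrix k n ℂ := of fun i j => φ (i, j)
  have hφ : φ = (T ⊗ₖ (1 : Mat n)) *ᵥ maxEnt := by
    ext x
    simp [mulVec, dotProduct, Fintype.sum_prod_type, maxEnt, T, one_apply]
  rw [hφ, ← mul_outer_mul_conjTranspose, tensorMap_id_conj, le_iff]
  convert (le_iff.1 hc.outer_maxEnt_le).mul_mul_conjTranspose_same (T ⊗ₖ (1 : Mat n)) using 1
  rw [Matrix.mul_sub, Matrix.sub_mul, Matrix.mul_smul, Matrix.smul_mul]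

lemma le_smul_tensorMap (hc : IsCbIndex E c) {X : Mat (k × n)} (hX : 0 ≤ X) :
    X ≤ c • tensorMap .id E X := by
  obtain ⟨ι, φ, rfl⟩ := posSemidef_iff_eq_sum_vecMulVec.1 hX.posSemidef
  rw [map_sum, Finset.smul_sum]
  exact Finset.sum_le_sum fun i _ => hc.outer_le_smul_tensorMap (φ i)

lemma exists_vec_fin (hc : IsCbIndex E c) : ∃ (k : ℕ) (ψ : Fin k × n → ℂ),
    traceR (outer ψ) = c ∧ tensorMap .id E (outer ψ) ≤ 1 := by
  obtain ⟨ψ, hψ, -, hle⟩ := hc.exists_vec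
  let e := (Fintype.equivFin n).symm
  set U : Matrix (Fin (Fintype.card n)) n ℂ := (1 : Mat n).submatrix e id
  have hUU : U * Uᴴ = 1 := by
    rw [conjTranspose_submatrix, conjTranspose_one]
    exact (submatrix_mul_equiv 1 1 e (.refl n) e).trans (by simp)
  have hUU' : Uᴴ * U = 1 := by
    rw [conjTranspose_submatrix, conjTranspose_one]
    exact (submatrix_mul_equiv 1 1 id e id).trans (by simp)
  refine ⟨_, (U ⊗ₖ (1 : Mat n)) *ᵥ ψ, ?_, ?_⟩
  · rw [← mul_outer_mul_conjTranspose, traceR, trace_mul_comm, ← Matrix.mul_assoc]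
    rw [conjTranspose_kronecker, ← mul_kronecker_mul, hUU', conjTranspose_one, one_mul,
      one_kronecker_one, Matrix.one_mul]
    exact hψ
  · rw [← mul_outer_mul_conjTranspose, tensorMap_id_conj, le_iff]
    convert (le_iff.1 hle).mul_mul_conjTranspose_same (U ⊗ₖ (1 : Mat n)) using 1
    simp [Matrix.mul_sub, Matrix.sub_mul, conjTranspose_kronecker, ← mul_kronecker_mul, hUU]

end IsCbIndex

end CbIndex

/-! ### cb-relative entropy -/

section CbRelativeEntropy

lemma DpCb_of_isEmpty [IsEmpty n] (p : ℝ≥0∞) (N : Set (Mat n)) : DpCb p N = ⊥ := by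
  simp [DpCb, DpRel, IsDensity, trace]

section

variable {N : StarSubalgebra ℂ (Mat n)} {E : Mat n →ₗ[ℂ] Mat n} {c : ℝ} {p : ℝ≥0∞}
  (hE : IsCondExp (N : Set (Mat n)) E) (hc : IsCbIndex E c) (hp : 1 ≤ p)

include hE hc hp

lemma DpCb_le_log : DpCb p (N : Set (Mat n)) ≤ Real.log c := by
  refine iSup_le fun k => iSup₂_le fun ρ hρ => ?_
  have hF := hE.id_tensorMap (k := Fin k)
  have hσ : IsDensity (tensorMap .id E ρ) :=
    ⟨(hF.nonneg hρ.2.1.nonneg).posSemidef, by rw [hF.trace_eq, hρ.2.2]⟩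
  exact (iInf₂_le _ ⟨hF.mem ρ, hσ⟩).trans
    (Dp_le_log hp hρ.2 hσ (hc.le_smul_tensorMap hρ.2.1.nonneg))

lemma log_le_DpCb [Nonempty n] : Real.log c ≤ DpCb p (N : Set (Mat n)) := by
  obtain ⟨k, ψ, hψ, hle⟩ := hc.exists_vec_fin
  have hF := hE.id_tensorMap (k := Fin k)
  have hc0 := hc.pos
  set φ : Fin k × n → ℂ := √c⁻¹ • ψ
  have hφ : outer φ = c⁻¹ • outer ψ := by
    rw [outer_smul, Real.sq_sqrt (inv_nonneg.2 hc0.le)]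
  have hdensity : IsDensity (outer φ) := by
    refine ⟨(outer_nonneg φ).posSemidef, ?_⟩
    rw [← coe_traceR (outer_nonneg φ), hφ, traceR_smul, hψ, inv_mul_cancel₀ hc0.ne',
      Complex.ofReal_one]
  refine le_iSup_of_le k (le_iSup₂_of_le _ ⟨trivial, hdensity⟩ (le_iInf₂ fun σ hσ => ?_))
  refine log_le_Dp_outer hp hdensity hσ.2 hc0 ?_
  calc c * traceR (outer φ * σ) = traceR (outer ψ * σ) := by
        rw [hφ, smul_mul_assoc, traceR_smul, mul_inv_cancel_left₀ hc0.ne']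
    _ = traceR (tensorMap .id E (outer ψ) * σ) := (hF.traceR_mul _ hσ.1).symm
    _ = traceR (σ * tensorMap .id E (outer ψ)) := traceR_mul_comm _ _
    _ ≤ traceR (σ * 1) := traceR_mul_le_mul_left hσ.2.1.nonneg hle
    _ = 1 := by rw [mul_one, hσ.2.traceR_eq_one]

lemma DpCb_eq_log [Nonempty n] : DpCb p (N : Set (Mat n)) = Real.log c :=
  (DpCb_le_log hE hc hp).antisymm (log_le_DpCb hE hc hp)

end

theorem statement16_general {n₁ n₂ : Type*} [Fintype n₁] [DecidableEq n₁] [Fintype n₂]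
    [DecidableEq n₂] (N₁ : StarSubalgebra ℂ (Mat n₁)) (N₂ : StarSubalgebra ℂ (Mat n₂))
    {p q r : ℝ≥0∞} (hp : 1 ≤ p) (hq : 1 ≤ q) (hr : 1 ≤ r) :
    DpCb p (tensorSpan (N₁ : Set (Mat n₁)) (N₂ : Set (Mat n₂))) =
      DpCb q (N₁ : Set (Mat n₁)) + DpCb r (N₂ : Set (Mat n₂)) := by
  rcases isEmpty_or_nonempty n₁ with h₁ | h₁
  · rw [DpCb_of_isEmpty, DpCb_of_isEmpty q, EReal.bot_add]
  rcases isEmpty_or_nonempty n₂ with h₂ | h₂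
  · rw [DpCb_of_isEmpty, DpCb_of_isEmpty r, EReal.add_bot]
  obtain ⟨E₁, hE₁⟩ := exists_isCondExp (Subalgebra.toSubmodule N₁.toSubalgebra)
  obtain ⟨E₂, hE₂⟩ := exists_isCondExp (Subalgebra.toSubmodule N₂.toSubalgebra)
  obtain ⟨c₁, hc₁⟩ := IsCondExp.exists_isCbIndex (N := N₁) hE₁
  obtain ⟨c₂, hc₂⟩ := IsCondExp.exists_isCbIndex (N := N₂) hE₂
  calc DpCb p (tensorSpan (N₁ : Set (Mat n₁)) (N₂ : Set (Mat n₂)))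
      = Real.log (c₁ * c₂) :=
        DpCb_eq_log (N := tensorAlg N₁ N₂) (hE₁.tensorMap hE₂) (hc₁.tensorMap hc₂) hp
    _ = Real.log c₁ + Real.log c₂ := by
        rw [Real.log_mul hc₁.pos.ne' hc₂.pos.ne', EReal.coe_add]
    _ = DpCb q (N₁ : Set (Mat n₁)) + DpCb r (N₂ : Set (Mat n₂)) := by
        rw [DpCb_eq_log hE₁ hc₁ hq, DpCb_eq_log hE₂ hc₂ hr]

end CbRelativeEntropy

end

/-- for unital *-subalgebras `N₁ ⊆ M_{m₁}`, `N₂ ⊆ M_{m₂}` and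
`1 ≤ p ≤ ∞`,
`D_{p,cb}(M_{m₁} ⊗ M_{m₂}‖N₁ ⊗ N₂) ≤ D_{p,cb}(M_{m₁}‖N₁) + D_{∞,cb}(M_{m₂}‖N₂)`;
in particular for `p = 1` and `p = ∞` the cb-relative entropy is additive. -/
theorem statement16 {m₁ m₂ : ℕ}
    (N₁ : StarSubalgebra ℂ (Mat (Fin m₁))) (N₂ : StarSubalgebra ℂ (Mat (Fin m₂)))
    (p : ℝ≥0∞) (hp : 1 ≤ p) :
    DpCb p (tensorSpan (N₁ : Set (Mat (Fin m₁))) (N₂ : Set (Mat (Fin m₂)))) ≤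
      DpCb p (N₁ : Set (Mat (Fin m₁))) + DpCb ⊤ (N₂ : Set (Mat (Fin m₂))) ∧
    DpCb 1 (tensorSpan (N₁ : Set (Mat (Fin m₁))) (N₂ : Set (Mat (Fin m₂))))
      = DpCb 1 (N₁ : Set (Mat (Fin m₁))) + DpCb 1 (N₂ : Set (Mat (Fin m₂))) ∧
    DpCb ⊤ (tensorSpan (N₁ : Set (Mat (Fin m₁))) (N₂ : Set (Mat (Fin m₂))))
      = DpCb ⊤ (N₁ : Set (Mat (Fin m₁))) + DpCb ⊤ (N₂ : Set (Mat (Fin m₂))) :=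
  ⟨(statement16_general N₁ N₂ hp hp le_top).le, statement16_general N₁ N₂ le_rfl le_rfl le_rfl,
    statement16_general N₁ N₂ le_top le_top le_top⟩

end GJL
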